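/- Let n ≥ 3. Consider the curve-germ with semigroup (3,7,11) in ℝ^{2n} (coordinates (p₁,q₁,p₂,q₂,p₃,q₃,…,pₙ,qₙ), all unlisted coordinates equal to 0) f(t) = (t³, t¹¹, t⁷, 0, t¹¹, 0, …, 0). Then Lt(f) = 11. -/

import Mathlib

noncomputable section

/-- The order of vanishing at `0` of a function `h : ℝ → ℝ`: the least `k ≥ 1` such that
the `k`-th derivative of `h` at `0` is nonzero, and `∞` if all derivatives vanish at `0`. -/
def vanishOrder (h : ℝ → ℝ) : ℕ∞ :=
  sInf {k : ℕ∞ | ∃ m : ℕ, k = m ∧ 1 ≤ m ∧ iteratedDeriv m h 0 ≠ 0}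

/-- The standard symplectic form `ω = ∑ dpᵢ ∧ dqᵢ` on `ℝ^{2n}`, where the coordinates are
ordered as `(p₁, q₁, …, pₙ, qₙ)` (so `pᵢ` has index `2(i-1)` and `qᵢ` has index `2(i-1)+1`). -/
def stdSymp (n : ℕ) (u v : Fin (2 * n) → ℝ) : ℝ :=
  ∑ i : Fin n,
    (u ⟨2 * i.val, by have := i.isLt; omega⟩ * v ⟨2 * i.val + 1, by have := i.isLt; omega⟩ -
     u ⟨2 * i.val + 1, by have := i.isLt; omega⟩ * v ⟨2 * i.val, by have := i.isLt; omega⟩)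

/-- A germ at `0` of a smooth Lagrangian submanifold of `(ℝ^{2n}, ω)`, given by `n` smooth
functions `H₁, …, Hₙ` vanishing at `0`, whose differentials are linearly independent at the
points of `{H₁ = ⋯ = Hₙ = 0}` near `0`, and such that `ω` vanishes on `ker DH(x)` at every
such point. -/
structure LagrangianGerm (n : ℕ) : Type where
  H : Fin n → (Fin (2 * n) → ℝ) → ℝ
  smooth : ∀ i, ContDiff ℝ (⊤ : ℕ∞) (H i)
  zero_at_zero : ∀ i, H i 0 = 0
  lagrangian : ∃ U : Set (Fin (2 * n) → ℝ), IsOpen U ∧ 0 ∈ U ∧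
    ∀ x ∈ U, (∀ i, H i x = 0) →
      LinearIndependent ℝ (fun i => fderiv ℝ (H i) x) ∧
      ∀ u v : Fin (2 * n) → ℝ, (∀ i, fderiv ℝ (H i) x u = 0) →
        (∀ i, fderiv ℝ (H i) x v = 0) → stdSymp n u v = 0

/-- The tangency order `t(f, L)` of a curve `f` to a Lagrangian submanifold-germ `L`:
the minimum over `i` of the order of vanishing at `0` of `Hᵢ ∘ f`. -/
def tOrd {n : ℕ} (f : ℝ → Fin (2 * n) → ℝ) (L : LagrangianGerm n) : ℕ∞ :=
  ⨅ i : Fin n, vanishOrder (fun t => L.H i (f t))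

/-- The Lagrangian tangency order `Lt(f)` of a curve `f`. -/
def Lt1 {n : ℕ} (f : ℝ → Fin (2 * n) → ℝ) : ℕ∞ :=
  ⨆ L : LagrangianGerm n, tOrd f L

/-- The Lagrangian tangency order `Lt(f, g)` of a multi-germ of two curves. -/
def Lt2 {n : ℕ} (f g : ℝ → Fin (2 * n) → ℝ) : ℕ∞ :=
  ⨆ L : LagrangianGerm n, min (tOrd f L) (tOrd g L)

/-- The Lagrangian tangency order `Lt(f, g, h)` of a multi-germ of three curves. -/
def Lt3 {n : ℕ} (f g h : ℝ → Fin (2 * n) → ℝ) : ℕ∞ :=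
  ⨆ L : LagrangianGerm n, min (tOrd f L) (min (tOrd g L) (tOrd h L))

/-!
Write `f t = t³ a + t⁷ b + t¹¹ c` with constant vectors `a, b, c`. For smooth `G`, Euler's identity
`t (G ∘ f)' = ∑ dⱼ t^{dⱼ} (∂_{aⱼ} G ∘ f)` is a recursion for the derivatives of `G ∘ f` at `0`, and
it shows by induction that those of order outside the semigroup generated by the exponents vanish,
while at a minimal generator `dᵢ` of the semigroup only the linear term `dᵢ! · DG(0) aᵢ` survives.
The numbers `3` and `11` are minimal generators of `⟨3, 7, 11⟩`, so a Lagrangian germ with tangency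
order above `11` would have both `a` and `c` in its tangent space at `0`; but `ω(a, c) = 1`.
Conversely, the plane `{q = 0}` has tangency order `11`, because `q₁ = t¹¹` is the only nonzero
`q`-coordinate of `f`.
-/

open scoped ContDiff

section Derivatives

variable {𝕜 : Type*} [NontriviallyNormedField 𝕜]

theorem iteratedDeriv_pow_mul_zero {g : 𝕜 → 𝕜} {k : ℕ} (hg : ContDiffAt 𝕜 k g 0) (m : ℕ) :
    iteratedDeriv k (fun t => t ^ m * g t) 0 = k.descFactorial m * iteratedDeriv (k - m) g 0 := by
  rw [iteratedDeriv_fun_mul (by fun_prop) hg]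
  simp only [iteratedDeriv_fun_pow_zero, Nat.cast_ite, Nat.cast_zero, mul_ite, mul_zero,
    ite_mul, zero_mul, Finset.sum_ite_eq', Finset.mem_range, Nat.lt_succ_iff]
  split_ifs with hmk
  · rw [Nat.descFactorial_eq_factorial_mul_choose]
    push_cast
    ring
  · rw [Nat.descFactorial_of_lt (not_le.mp hmk), Nat.cast_zero, zero_mul]

theorem iteratedDeriv_mul_deriv_zero {h : 𝕜 → 𝕜} (hh : ContDiff 𝕜 ∞ h) (k : ℕ) :
    iteratedDeriv k (fun t => t * deriv h t) 0 = k * iteratedDeriv k h 0 := by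
  have hh' : ContDiff 𝕜 ∞ (deriv h) := (contDiff_infty_iff_deriv.mp hh).2
  have leibniz := iteratedDeriv_pow_mul_zero (contDiff_infty.mp hh' k).contDiffAt 1
  simp only [pow_one, Nat.descFactorial_one] at leibniz
  rw [leibniz]
  cases k with
  | zero => simp
  | succ k => rw [Nat.add_sub_cancel, iteratedDeriv_succ']

theorem contDiff_fderiv_apply {E F : Type*} [NormedAddCommGroup E] [NormedSpace 𝕜 E]
    [NormedAddCommGroup F] [NormedSpace 𝕜 F] {G : E → F} (hG : ContDiff 𝕜 ∞ G) (v : E) :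
    ContDiff 𝕜 ∞ fun x => fderiv 𝕜 G x v :=
  (hG.fderiv_right le_rfl).clm_apply contDiff_const

end Derivatives

section MonomialCurve

/-- The curve `t ↦ ∑ j, t ^ d j • a j` with exponents `d` and constant vectors `a`. Exponents may
repeat. -/
def monomialCurve {ι E : Type*} [Fintype ι] [AddCommGroup E] [Module ℝ E]
    (d : ι → ℕ) (a : ι → E) (t : ℝ) : E :=
  ∑ j, t ^ d j • a j

/-- The exponent `d i` is a minimal generator of the semigroup generated by `d`: it is not a sum of
the other exponents. Since the empty sum is `0`, this entails `d i ≠ 0`. -/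
def IsMinimalGenerator {ι : Type*} (d : ι → ℕ) (i : ι) : Prop :=
  d i ∉ AddSubmonoid.closure (d '' {i}ᶜ)

variable {ι : Type*} {d : ι → ℕ} {i : ι}

theorem IsMinimalGenerator.ne_zero (hi : IsMinimalGenerator d i) : d i ≠ 0 :=
  fun h => hi (h ▸ zero_mem _)

theorem mem_closure_image_compl_of_lt {s : ℕ} (hs : s ∈ AddSubmonoid.closure (Set.range d))
    (hlt : s < d i) : s ∈ AddSubmonoid.closure (d '' {i}ᶜ) := by
  induction hs using AddSubmonoid.closure_induction with
  | mem _ hx =>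
    obtain ⟨j, rfl⟩ := hx
    exact AddSubmonoid.subset_closure ⟨j, fun hji => hlt.ne (congrArg d hji), rfl⟩
  | zero => exact zero_mem _
  | add x y _ _ ihx ihy => exact add_mem (ihx (by omega)) (ihy (by omega))

theorem IsMinimalGenerator.sub_notMem_closure (hi : IsMinimalGenerator d i) {j : ι} (hji : j ≠ i)
    (hj : d j ≠ 0) (hle : d j ≤ d i) : d i - d j ∉ AddSubmonoid.closure (Set.range d) := by
  intro hmem
  apply hi
  rw [← Nat.sub_add_cancel hle]
  exact add_mem (mem_closure_image_compl_of_lt hmem (by omega))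
    (AddSubmonoid.subset_closure ⟨j, hji, rfl⟩)

variable [Fintype ι] {E : Type*} [NormedAddCommGroup E] [NormedSpace ℝ E] (d) (a : ι → E)

theorem contDiff_monomialCurve {r : WithTop ℕ∞} : ContDiff ℝ r (monomialCurve d a) := by
  unfold monomialCurve
  fun_prop

theorem hasDerivAt_monomialCurve (t : ℝ) :
    HasDerivAt (monomialCurve d a) (∑ j, (d j * t ^ (d j - 1)) • a j) t := by
  unfold monomialCurve
  exact HasDerivAt.fun_sum fun j _ => (hasDerivAt_pow (d j) t).smul_const (a j)

theorem monomialCurve_apply {m : Type*} (b : ι → m → ℝ) (t : ℝ) (l : m) :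
    monomialCurve d b t l = monomialCurve d (fun j => b j l) t := by
  simp [monomialCurve]

variable {d} {G : E → ℝ}

theorem monomialCurve_zero (hd : ∀ j, d j ≠ 0) : monomialCurve d a 0 = 0 := by
  simp [monomialCurve, hd]

theorem mul_deriv_comp_monomialCurve (hG : Differentiable ℝ G) (t : ℝ) :
    t * deriv (fun s => G (monomialCurve d a s)) t =
      ∑ j, d j * (t ^ d j * fderiv ℝ G (monomialCurve d a t) (a j)) := by
  have chain : HasDerivAt (fun s => G (monomialCurve d a s)) _ t :=
    (hG (monomialCurve d a t)).hasFDerivAt.comp_hasDerivAt t (hasDerivAt_monomialCurve d a t)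
  rw [chain.deriv, map_sum, Finset.mul_sum]
  refine Finset.sum_congr rfl fun j _ => ?_
  rw [map_smul, smul_eq_mul]
  rcases Nat.eq_zero_or_pos (d j) with hj | hj
  · simp [hj]
  · rw [← mul_pow_sub_one hj.ne' t]
    ring

theorem mul_iteratedDeriv_comp_monomialCurve (hG : ContDiff ℝ ∞ G) (k : ℕ) :
    k * iteratedDeriv k (fun t => G (monomialCurve d a t)) 0 =
      ∑ j, d j * (k.descFactorial (d j) *
        iteratedDeriv (k - d j) (fun t => fderiv ℝ G (monomialCurve d a t) (a j)) 0) := by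
  have hcomp {F : E → ℝ} (hF : ContDiff ℝ ∞ F) : ContDiff ℝ ∞ fun t => F (monomialCurve d a t) :=
    hF.comp (contDiff_monomialCurve d a)
  have hpartial (j : ι) : ContDiffAt ℝ k (fun t => fderiv ℝ G (monomialCurve d a t) (a j)) 0 :=
    (contDiff_infty.mp (hcomp (contDiff_fderiv_apply hG (a j))) k).contDiffAt
  have hterm (j : ι) : ContDiffAt ℝ k
      (fun t => d j * (t ^ d j * fderiv ℝ G (monomialCurve d a t) (a j))) 0 :=
    contDiffAt_const.mul ((contDiffAt_id.pow (d j)).mul (hpartial j))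
  rw [← iteratedDeriv_mul_deriv_zero (hcomp hG),
    funext (mul_deriv_comp_monomialCurve a (hG.differentiable (by simp))),
    iteratedDeriv_fun_sum fun j _ => hterm j]
  refine Finset.sum_congr rfl fun j _ => ?_
  rw [iteratedDeriv_const_mul_field, iteratedDeriv_pow_mul_zero (hpartial j)]

theorem iteratedDeriv_comp_monomialCurve_of_notMem_closure (hG : ContDiff ℝ ∞ G) {k : ℕ}
    (hk : k ∉ AddSubmonoid.closure (Set.range d)) :
    iteratedDeriv k (fun t => G (monomialCurve d a t)) 0 = 0 := by
  induction k using Nat.strong_induction_on generalizing G with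
  | _ k ih =>
  have hk0 : (k : ℝ) ≠ 0 := Nat.cast_ne_zero.mpr fun h => hk (h ▸ zero_mem _)
  refine (mul_eq_zero_iff_left hk0).mp ?_
  rw [mul_iteratedDeriv_comp_monomialCurve a hG]
  refine Finset.sum_eq_zero fun j _ => ?_
  rcases Nat.eq_zero_or_pos (d j) with hj | hj
  · simp [hj]
  rcases lt_or_ge k (d j) with hlt | hle
  · simp [Nat.descFactorial_of_lt hlt]
  have hsub : k - d j ∉ AddSubmonoid.closure (Set.range d) := fun hmem =>
    hk (Nat.sub_add_cancel hle ▸ add_mem hmem (AddSubmonoid.subset_closure ⟨j, rfl⟩))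
  rw [ih _ (by omega) (contDiff_fderiv_apply hG (a j)) hsub, mul_zero, mul_zero]

theorem IsMinimalGenerator.iteratedDeriv_comp_monomialCurve (hi : IsMinimalGenerator d i)
    (hG : ContDiff ℝ ∞ G) :
    iteratedDeriv (d i) (fun t => G (monomialCurve d a t)) 0 =
      (d i).factorial * fderiv ℝ G (monomialCurve d a 0) (a i) := by
  refine mul_left_cancel₀ (Nat.cast_ne_zero.mpr hi.ne_zero : (d i : ℝ) ≠ 0) ?_
  rw [mul_iteratedDeriv_comp_monomialCurve a hG, Finset.sum_eq_single_of_mem i (Finset.mem_univ i)]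
  · rw [Nat.descFactorial_self, Nat.sub_self, iteratedDeriv_zero]
  intro j _ hji
  rcases Nat.eq_zero_or_pos (d j) with hj | hj
  · simp [hj]
  rcases lt_or_ge (d i) (d j) with hlt | hle
  · simp [Nat.descFactorial_of_lt hlt]
  rw [iteratedDeriv_comp_monomialCurve_of_notMem_closure a (contDiff_fderiv_apply hG (a j))
    (hi.sub_notMem_closure hji hj.ne' hle), mul_zero, mul_zero]

end MonomialCurve

section VanishOrder

theorem iteratedDeriv_eq_zero_of_lt_vanishOrder {h : ℝ → ℝ} {m : ℕ} (hm : m ≠ 0)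
    (hlt : m < vanishOrder h) : iteratedDeriv m h 0 = 0 := by
  by_contra hne
  exact hlt.not_ge (sInf_le ⟨m, rfl, Nat.one_le_iff_ne_zero.mpr hm, hne⟩)

theorem le_vanishOrder_monomialCurve {ι : Type*} [Fintype ι] {d : ι → ℕ} {c : ι → ℝ} {N : ℕ}
    (hN : ∀ j, c j ≠ 0 → N ≤ d j) : N ≤ vanishOrder (monomialCurve d c) := by
  refine le_sInf ?_
  rintro _ ⟨m, rfl, _, hne⟩
  unfold monomialCurve at hne
  rw [iteratedDeriv_fun_sum fun j _ => by fun_prop] at hne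
  obtain ⟨j, _, hj⟩ := Finset.exists_ne_zero_of_sum_ne_zero hne
  rw [iteratedDeriv_smul_const (by fun_prop), iteratedDeriv_fun_pow_zero, smul_ne_zero_iff] at hj
  have hmd : m = d j := of_not_not fun h => hj.1 (by rw [if_neg h, Nat.cast_zero])
  exact_mod_cast hmd ▸ hN j hj.2

end VanishOrder

section LagrangianTangency

variable {n : ℕ}

/-- The position of the coordinate `pᵢ` in `(p₁, q₁, …, pₙ, qₙ)`, with `i` counted from `0`. -/
def pIndex (i : Fin n) : Fin (2 * n) := ⟨2 * i.val, by omega⟩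

/-- The position of the coordinate `qᵢ` in `(p₁, q₁, …, pₙ, qₙ)`, with `i` counted from `0`. -/
def qIndex (i : Fin n) : Fin (2 * n) := ⟨2 * i.val + 1, by omega⟩

theorem qIndex_injective : Function.Injective (qIndex (n := n)) := by
  intro i j hij
  have hval : 2 * i.val + 1 = 2 * j.val + 1 := congrArg Fin.val hij
  exact Fin.ext (by omega)

theorem stdSymp_eq_sum (u v : Fin (2 * n) → ℝ) :
    stdSymp n u v = ∑ i, (u (pIndex i) * v (qIndex i) - u (qIndex i) * v (pIndex i)) :=
  rfl

theorem linearIndependent_proj_comp (R : Type*) [CommRing R] [TopologicalSpace R]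
    [IsTopologicalRing R] {κ m : Type*} {e : κ → m} (he : Function.Injective e) :
    LinearIndependent R fun k => ContinuousLinearMap.proj (R := R) (φ := fun _ : m => R) (e k) := by
  classical
  rw [linearIndependent_iff']
  intro s g hg k hk
  have heval := DFunLike.congr_fun hg (Pi.single (e k) 1)
  simpa [Pi.single_apply, he.eq_iff, hk] using heval

/-- The Lagrangian plane `{q₁ = ⋯ = qₙ = 0}`, which gives lower bounds for `Lt1`. -/
def momentumPlane (n : ℕ) : LagrangianGerm n where
  H i x := x (qIndex i)
  smooth i := contDiff_apply ℝ ℝ (qIndex i)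
  zero_at_zero _ := rfl
  lagrangian := by
    refine ⟨Set.univ, isOpen_univ, Set.mem_univ 0, fun x _ _ => ?_⟩
    simp only [(hasFDerivAt_apply (𝕜 := ℝ) _ x).fderiv]
    refine ⟨linearIndependent_proj_comp ℝ qIndex_injective, fun u v hu hv => ?_⟩
    simp only [ContinuousLinearMap.proj_apply] at hu hv
    simp [stdSymp_eq_sum, hu, hv]

theorem le_Lt1_of_le_vanishOrder_qIndex {f : ℝ → Fin (2 * n) → ℝ} {N : ℕ∞}
    (hN : ∀ i, N ≤ vanishOrder fun t => f t (qIndex i)) : N ≤ Lt1 f :=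
  le_iSup_of_le (momentumPlane n) (le_iInf hN)

theorem LagrangianGerm.stdSymp_eq_zero (L : LagrangianGerm n) {u v : Fin (2 * n) → ℝ}
    (hu : ∀ l, fderiv ℝ (L.H l) 0 u = 0) (hv : ∀ l, fderiv ℝ (L.H l) 0 v = 0) :
    stdSymp n u v = 0 := by
  obtain ⟨U, _, h0, hU⟩ := L.lagrangian
  exact (hU 0 h0 L.zero_at_zero).2 u v hu hv

variable {ι : Type*} [Fintype ι] {d : ι → ℕ} {a : ι → Fin (2 * n) → ℝ} {i j : ι}

theorem LagrangianGerm.fderiv_apply_eq_zero_of_lt_tOrd (L : LagrangianGerm n) (hd : ∀ j, d j ≠ 0)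
    (hi : IsMinimalGenerator d i) (hlt : d i < tOrd (monomialCurve d a) L) (l : Fin n) :
    fderiv ℝ (L.H l) 0 (a i) = 0 := by
  have hderiv := iteratedDeriv_eq_zero_of_lt_vanishOrder (hd i) (hlt.trans_le (iInf_le _ l))
  rw [hi.iteratedDeriv_comp_monomialCurve a (L.smooth l), monomialCurve_zero a hd] at hderiv
  exact (mul_eq_zero_iff_left (Nat.cast_ne_zero.mpr (d i).factorial_ne_zero)).mp hderiv

theorem Lt1_monomialCurve_le (hd : ∀ j, d j ≠ 0) (hi : IsMinimalGenerator d i)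
    (hj : IsMinimalGenerator d j) (hω : stdSymp n (a i) (a j) ≠ 0) :
    Lt1 (monomialCurve d a) ≤ max (d i : ℕ∞) (d j) := by
  refine iSup_le fun L => le_of_not_gt fun hlt => hω ?_
  obtain ⟨hlti, hltj⟩ := max_lt_iff.mp hlt
  exact L.stdSymp_eq_zero (L.fderiv_apply_eq_zero_of_lt_tOrd hd hi hlti)
    (L.fderiv_apply_eq_zero_of_lt_tOrd hd hj hltj)

theorem le_Lt1_monomialCurve {N : ℕ} (hq : ∀ j l, a j (qIndex l) ≠ 0 → N ≤ d j) :
    N ≤ Lt1 (monomialCurve d a) := by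
  refine le_Lt1_of_le_vanishOrder_qIndex fun l => ?_
  simp only [monomialCurve_apply]
  exact le_vanishOrder_monomialCurve fun j => hq j l

theorem Lt1_monomialCurve (hd : ∀ j, d j ≠ 0) (hi : IsMinimalGenerator d i)
    (hj : IsMinimalGenerator d j) (hij : d i ≤ d j) (hω : stdSymp n (a i) (a j) ≠ 0)
    (hq : ∀ k l, a k (qIndex l) ≠ 0 → d j ≤ d k) : Lt1 (monomialCurve d a) = d j := by
  refine le_antisymm ?_ (le_Lt1_monomialCurve hq)
  simpa [hij] using Lt1_monomialCurve_le hd hi hj hω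

end LagrangianTangency

section Class2

/-- The directions of `t³`, `t⁷` and `t¹¹` in the curve `(t³, t¹¹, t⁷, 0, t¹¹, 0, …, 0)`, namely
`∂/∂p₁`, `∂/∂p₂` and `∂/∂q₁ + ∂/∂p₃`. Coordinates beyond `2 * n` are dropped. -/
def class2Direction (n : ℕ) : Fin 3 → Fin (2 * n) → ℝ :=
  ![fun j => if (j : ℕ) = 0 then 1 else 0,
    fun j => if (j : ℕ) = 2 then 1 else 0,
    fun j => if (j : ℕ) = 1 ∨ (j : ℕ) = 4 then 1 else 0]

theorem isMinimalGenerator_three : IsMinimalGenerator ![3, 7, 11] 0 := by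
  have himage : ![3, 7, 11] '' {0}ᶜ = ({7, 11} : Set ℕ) := by
    ext x
    simp [Fin.exists_fin_succ, eq_comm]
  rw [IsMinimalGenerator, himage, AddSubmonoid.mem_closure_pair]
  rintro ⟨r, s, hrs⟩
  change r * 7 + s * 11 = 3 at hrs
  omega

theorem isMinimalGenerator_eleven : IsMinimalGenerator ![3, 7, 11] 2 := by
  have himage : ![3, 7, 11] '' {2}ᶜ = ({3, 7} : Set ℕ) := by
    ext x
    simp [Fin.exists_fin_succ, eq_comm]
  rw [IsMinimalGenerator, himage, AddSubmonoid.mem_closure_pair]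
  rintro ⟨r, s, hrs⟩
  change r * 3 + s * 7 = 11 at hrs
  omega

theorem stdSymp_class2Direction {n : ℕ} (hn : 0 < n) :
    stdSymp n (class2Direction n 0) (class2Direction n 2) = 1 := by
  rw [stdSymp_eq_sum, Finset.sum_eq_single_of_mem ⟨0, hn⟩ (Finset.mem_univ _)]
  · simp [class2Direction, pIndex, qIndex]
  · intro i _ hi
    have hi0 : (i : ℕ) ≠ 0 := fun h => hi (Fin.ext h)
    simp [class2Direction, pIndex, qIndex, hi0]

theorem eq_two_of_class2Direction_qIndex_ne_zero {n : ℕ} {j : Fin 3} {l : Fin n}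
    (hne : class2Direction n j (qIndex l) ≠ 0) : j = 2 := by
  contrapose! hne
  fin_cases j
  · simp [class2Direction, qIndex]
  · simp [class2Direction, qIndex]
  · simp at hne

end Class2

theorem semigroup_3_7_11_class2_lagrangian_tangency_order_general
    (n : ℕ) (hn : 0 < n) (f : ℝ → Fin (2 * n) → ℝ)
    (hf : f = fun (t : ℝ) (j : Fin (2 * n)) =>
      if (j : ℕ) = 0 then t ^ 3 else if (j : ℕ) = 1 then t ^ 11 else
      if (j : ℕ) = 2 then t ^ 7 else if (j : ℕ) = 4 then t ^ 11 else 0) :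
    Lt1 f = 11 := by
  have hcurve : f = monomialCurve ![3, 7, 11] (class2Direction n) := by
    ext t j
    simp only [hf, monomialCurve, class2Direction, Fin.sum_univ_three]
    split_ifs <;> simp_all
  have hω : stdSymp n (class2Direction n 0) (class2Direction n 2) ≠ 0 := by
    rw [stdSymp_class2Direction hn]
    exact one_ne_zero
  rw [hcurve]
  exact Lt1_monomialCurve (by decide) isMinimalGenerator_three isMinimalGenerator_eleven
    (by decide) hω fun _ _ hne => by rw [eq_two_of_class2Direction_qIndex_ne_zero hne]

/-- The Lagrangian tangency order of the symplectic class (2) of the curve-germ with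
semigroup `(3,7,11)`. -/
theorem semigroup_3_7_11_class2_lagrangian_tangency_order
    (n : ℕ) (hn : 3 ≤ n)
    (f : ℝ → Fin (2 * n) → ℝ)
    (hf : f = fun (t : ℝ) (j : Fin (2 * n)) => if (j : ℕ) = 0 then t ^ 3 else if (j : ℕ) = 1 then t ^ 11 else if (j : ℕ) = 2 then t ^ 7 else if (j : ℕ) = 4 then t ^ 11 else (0 : ℝ)) :
    Lt1 f = 11 := by
  exact semigroup_3_7_11_class2_lagrangian_tangency_order_general n (by omega) f hf

end
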